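/- For every nonnegative integer n, there exist integers x, y, z, each relatively prime to 6, such that 24n + 13 = x² + 3y² + 9z². -/

import Mathlib

/-!
Let `N = 24n + 13`. Since `N ≡ 1 (mod 12)`, Dirichlet's theorem provides a prime `p = N * D - 3`
for which quadratic reciprocity makes `-D` a square modulo `p`. From a square root one writes down a
positive definite ternary form of determinant `3` representing `N`. By reduction theory every such
form is equivalent to `x² + y² + 3z²` or to `x² + 2(y² + yz + z²)`, and the second form omits the
class of `N` modulo `8`. In `N = x² + y² + 3z²` exactly one of `x` and `y` is divisible by `3`,
which gives `N = x² + 3y² + 9z²`; the automorphism `(x, y) ↦ ((x + 3y) / 2, (x - y) / 2)` of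
`x² + 3y²` then removes the common factors with `6`.
-/

section BinaryForms

variable {a b c : ℤ}

lemma exists_sq_two_mul_mul_add_le_sq (ha : 0 < a) (b : ℤ) :
    ∃ k : ℤ, (2 * (a * k + b)) ^ 2 ≤ a ^ 2 := by
  have remainder_nonneg : 0 ≤ (2 * b + a) % (2 * a) := Int.emod_nonneg _ (by positivity)
  have remainder_lt : (2 * b + a) % (2 * a) < 2 * a := Int.emod_lt_of_pos _ (by positivity)
  have division := Int.emod_add_mul_ediv (2 * b + a) (2 * a)
  exact ⟨-((2 * b + a) / (2 * a)), sq_le_sq' (by linarith) (by linarith)⟩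

lemma binaryForm_pos (ha : 0 < a) (hdet : 0 < a * c - b ^ 2) (k : ℤ) :
    0 < a * k ^ 2 + 2 * b * k + c := by
  have complete_square :
      a * (a * k ^ 2 + 2 * b * k + c) = (a * k + b) ^ 2 + (a * c - b ^ 2) := by ring
  exact pos_of_mul_pos_right (by rw [complete_square]; positivity) ha.le

lemma exists_binaryForm_lt (ha : 0 < a) (hdet : 4 * (a * c - b ^ 2) < 3 * a ^ 2) :
    ∃ k : ℤ, a * k ^ 2 + 2 * b * k + c < a := by
  obtain ⟨k, hk⟩ := exists_sq_two_mul_mul_add_le_sq ha b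
  refine ⟨k, lt_of_mul_lt_mul_left (a := a) ?_ ha.le⟩
  linarith

end BinaryForms

/-- The integral ternary quadratic form with Gram matrix
`!![xx, xy, xz; xy, yy, yz; xz, yz, zz]`; its mixed terms thus have even coefficients. -/
structure TernaryForm where
  xx : ℤ
  xy : ℤ
  yy : ℤ
  xz : ℤ
  yz : ℤ
  zz : ℤ

namespace TernaryForm

/-- The value of the form at an integer vector. -/
def eval (F : TernaryForm) (x y z : ℤ) : ℤ :=
  F.xx * x ^ 2 + 2 * F.xy * x * y + F.yy * y ^ 2 + 2 * F.xz * x * z + 2 * F.yz * y * z +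
    F.zz * z ^ 2

/-- `F` represents `N` if `N` is a value of `F` at an integer vector, which may be zero or
imprimitive. -/
def Represents (F : TernaryForm) (N : ℤ) : Prop :=
  ∃ x y z : ℤ, F.eval x y z = N

/-- The determinant of the Gram matrix. -/
def det (F : TernaryForm) : ℤ :=
  F.xx * F.yy * F.zz + 2 * F.xy * F.xz * F.yz - F.xx * F.yz ^ 2 - F.yy * F.xz ^ 2 -
    F.zz * F.xy ^ 2

/-- The `y²` coefficient of the Schur complement of `xx`, scaled by `xx` to be integral. -/
def schurYY (F : TernaryForm) : ℤ := F.xx * F.yy - F.xy ^ 2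

/-- Half the `yz` coefficient of the Schur complement of `xx`, scaled by `xx` to be integral. -/
def schurYZ (F : TernaryForm) : ℤ := F.xx * F.yz - F.xy * F.xz

/-- The `z²` coefficient of the Schur complement of `xx`, scaled by `xx` to be integral. -/
def schurZZ (F : TernaryForm) : ℤ := F.xx * F.zz - F.xz ^ 2

/-- Positive definiteness, expressed by Sylvester's criterion on the leading principal minors. -/
structure PosDef (F : TernaryForm) : Prop where
  xx_pos : 0 < F.xx
  schurYY_pos : 0 < F.schurYY
  det_pos : 0 < F.det

/-- A positive definite form is reduced if the binary forms with Gram matrices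
`!![xx, xy; xy, yy]` and `!![schurYY, schurYZ; schurYZ, schurZZ]` satisfy the Gauss bound on the
leading coefficient in terms of the determinant, the latter determinant being `xx * det`. -/
structure IsReduced (F : TernaryForm) : Prop extends PosDef F where
  three_mul_xx_sq_le : 3 * F.xx ^ 2 ≤ 4 * F.schurYY
  three_mul_schurYY_sq_le : 3 * F.schurYY ^ 2 ≤ 4 * (F.xx * F.det)

/-- The equivalent form obtained by the substitution `(x, y, z) ↦ (k * x + y, x, z)`. -/
def shearSwapXY (F : TernaryForm) (k : ℤ) : TernaryForm where
  xx := F.xx * k ^ 2 + 2 * F.xy * k + F.yy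
  xy := F.xx * k + F.xy
  yy := F.xx
  xz := F.xz * k + F.yz
  yz := F.xz
  zz := F.zz

/-- The equivalent form obtained by the substitution `(x, y, z) ↦ (x, k * y + z, y)`. -/
def shearSwapYZ (F : TernaryForm) (k : ℤ) : TernaryForm where
  xx := F.xx
  xy := F.xy * k + F.xz
  yy := F.yy * k ^ 2 + 2 * F.yz * k + F.zz
  xz := F.xy
  yz := F.yy * k + F.yz
  zz := F.yy

variable {F : TernaryForm}

lemma schurYY_mul_schurZZ_sub_schurYZ_sq (F : TernaryForm) :
    F.schurYY * F.schurZZ - F.schurYZ ^ 2 = F.xx * F.det := by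
  unfold schurYY schurYZ schurZZ det
  ring

lemma xx_mul_schurYY_mul_eval (F : TernaryForm) (x y z : ℤ) :
    F.xx * F.schurYY * F.eval x y z =
      F.schurYY * (F.xx * x + F.xy * y + F.xz * z) ^ 2 +
        (F.schurYY * y + F.schurYZ * z) ^ 2 + F.xx * F.det * z ^ 2 := by
  unfold schurYY schurYZ det eval
  ring

section Shear

variable (F) (k : ℤ)

lemma eval_shearSwapXY (x y z : ℤ) :
    (F.shearSwapXY k).eval x y z = F.eval (k * x + y) x z := by
  unfold shearSwapXY eval
  ring

lemma eval_shearSwapYZ (x y z : ℤ) :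
    (F.shearSwapYZ k).eval x y z = F.eval x (k * y + z) y := by
  unfold shearSwapYZ eval
  ring

lemma represents_shearSwapXY {N : ℤ} : (F.shearSwapXY k).Represents N ↔ F.Represents N := by
  refine ⟨fun ⟨x, y, z, h⟩ ↦ ⟨k * x + y, x, z, by rw [← h, eval_shearSwapXY]⟩,
    fun ⟨x, y, z, h⟩ ↦ ⟨y, x - k * y, z, ?_⟩⟩
  rw [eval_shearSwapXY, add_sub_cancel, h]

lemma represents_shearSwapYZ {N : ℤ} : (F.shearSwapYZ k).Represents N ↔ F.Represents N := by
  refine ⟨fun ⟨x, y, z, h⟩ ↦ ⟨x, k * y + z, y, by rw [← h, eval_shearSwapYZ]⟩,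
    fun ⟨x, y, z, h⟩ ↦ ⟨x, z, y - k * z, ?_⟩⟩
  rw [eval_shearSwapYZ, add_sub_cancel, h]

lemma det_shearSwapXY : (F.shearSwapXY k).det = F.det := by
  unfold shearSwapXY det
  ring

lemma det_shearSwapYZ : (F.shearSwapYZ k).det = F.det := by
  unfold shearSwapYZ det
  ring

lemma schurYY_shearSwapXY : (F.shearSwapXY k).schurYY = F.schurYY := by
  unfold shearSwapXY schurYY
  ring

lemma schurYY_shearSwapYZ :
    (F.shearSwapYZ k).schurYY = F.schurYY * k ^ 2 + 2 * F.schurYZ * k + F.schurZZ := by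
  unfold shearSwapYZ schurYY schurYZ schurZZ
  ring

end Shear

lemma PosDef.shearSwapXY (hF : F.PosDef) (k : ℤ) : (F.shearSwapXY k).PosDef where
  xx_pos := binaryForm_pos hF.xx_pos hF.schurYY_pos k
  schurYY_pos := by simpa only [schurYY_shearSwapXY] using hF.schurYY_pos
  det_pos := by simpa only [det_shearSwapXY] using hF.det_pos

lemma PosDef.shearSwapYZ (hF : F.PosDef) (k : ℤ) : (F.shearSwapYZ k).PosDef where
  xx_pos := hF.xx_pos
  schurYY_pos := by
    rw [schurYY_shearSwapYZ]
    refine binaryForm_pos hF.schurYY_pos ?_ k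
    rw [schurYY_mul_schurZZ_sub_schurYZ_sq]
    exact mul_pos hF.xx_pos hF.det_pos
  det_pos := by simpa only [det_shearSwapYZ] using hF.det_pos

lemma PosDef.exists_shearSwapXY_xx_lt (hF : F.PosDef) (h : 4 * F.schurYY < 3 * F.xx ^ 2) :
    ∃ k, (F.shearSwapXY k).xx < F.xx :=
  exists_binaryForm_lt hF.xx_pos h

lemma PosDef.exists_shearSwapYZ_schurYY_lt (hF : F.PosDef)
    (h : 4 * (F.xx * F.det) < 3 * F.schurYY ^ 2) :
    ∃ k, (F.shearSwapYZ k).schurYY < F.schurYY := by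
  simp only [schurYY_shearSwapYZ]
  exact exists_binaryForm_lt hF.schurYY_pos (by rwa [schurYY_mul_schurZZ_sub_schurYZ_sq])

theorem PosDef.exists_isReduced {F : TernaryForm} (hF : F.PosDef) :
    ∃ G : TernaryForm, G.IsReduced ∧ G.det = F.det ∧ ∀ N, G.Represents N ↔ F.Represents N := by
  by_cases hxx : 4 * F.schurYY < 3 * F.xx ^ 2
  · obtain ⟨k, hk⟩ := hF.exists_shearSwapXY_xx_lt hxx
    have := (Int.toNat_lt_toNat hF.xx_pos).mpr hk
    obtain ⟨G, hG, hdet, hrep⟩ := (hF.shearSwapXY k).exists_isReduced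
    exact ⟨G, hG, hdet.trans (F.det_shearSwapXY k),
      fun N ↦ (hrep N).trans (F.represents_shearSwapXY k)⟩
  by_cases hschur : 4 * (F.xx * F.det) < 3 * F.schurYY ^ 2
  · obtain ⟨k, hk⟩ := hF.exists_shearSwapYZ_schurYY_lt hschur
    have := (Int.toNat_lt_toNat hF.schurYY_pos).mpr hk
    obtain ⟨G, hG, hdet, hrep⟩ := (hF.shearSwapYZ k).exists_isReduced
    exact ⟨G, hG, hdet.trans (F.det_shearSwapYZ k),
      fun N ↦ (hrep N).trans (F.represents_shearSwapYZ k)⟩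
  exact ⟨F, ⟨hF, not_lt.mp hxx, not_lt.mp hschur⟩, rfl, fun _ ↦ Iff.rfl⟩
termination_by (F.xx.toNat, F.schurYY.toNat)

lemma IsReduced.xx_pow_three_le (hF : F.IsReduced) : 27 * F.xx ^ 3 ≤ 64 * F.det := by
  have xx_pos := hF.xx_pos
  refine le_of_mul_le_mul_left (a := F.xx) ?_ xx_pos
  calc F.xx * (27 * F.xx ^ 3) = 3 * (3 * F.xx ^ 2) ^ 2 := by ring
    _ ≤ 3 * (4 * F.schurYY) ^ 2 := by gcongr 3 * ?_ ^ 2; exact hF.three_mul_xx_sq_le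
    _ = 16 * (3 * F.schurYY ^ 2) := by ring
    _ ≤ 16 * (4 * (F.xx * F.det)) := by gcongr 16 * ?_; exact hF.three_mul_schurYY_sq_le
    _ = F.xx * (64 * F.det) := by ring

lemma IsReduced.xx_eq_one_of_det_eq_three (hF : F.IsReduced) (hdet : F.det = 3) : F.xx = 1 := by
  have xx_pos := hF.xx_pos
  have hcube := hF.xx_pow_three_le
  have xx_lt_two : F.xx < 2 := lt_of_pow_lt_pow_left₀ 3 (by norm_num) (by omega)
  omega

lemma IsReduced.schurYY_eq_one_or_two_of_det_eq_three (hF : F.IsReduced) (hdet : F.det = 3) :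
    F.schurYY = 1 ∨ F.schurYY = 2 := by
  have schurYY_pos := hF.schurYY_pos
  have hsq := hF.three_mul_schurYY_sq_le
  rw [hF.xx_eq_one_of_det_eq_three hdet, hdet] at hsq
  have schurYY_lt_three : F.schurYY < 3 := lt_of_pow_lt_pow_left₀ 2 (by norm_num) (by omega)
  omega

theorem PosDef.eq_or_eq_of_represents_of_det_eq_three (hF : F.PosDef) (hdet : F.det = 3) {N : ℤ}
    (hN : F.Represents N) :
    (∃ x y z : ℤ, N = x ^ 2 + y ^ 2 + 3 * z ^ 2) ∨
      ∃ x y z : ℤ, N = x ^ 2 + 2 * (y ^ 2 + y * z + z ^ 2) := by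
  obtain ⟨G, hG, hGdet, hGrep⟩ := hF.exists_isReduced
  rw [hdet] at hGdet
  obtain ⟨x, y, z, rfl⟩ := (hGrep N).mpr hN
  have squares := G.xx_mul_schurYY_mul_eval x y z
  have schur_det := G.schurYY_mul_schurZZ_sub_schurYZ_sq
  rw [hG.xx_eq_one_of_det_eq_three hGdet, hGdet, one_mul] at squares schur_det
  rcases hG.schurYY_eq_one_or_two_of_det_eq_three hGdet with h | h <;>
    simp only [h, one_mul] at squares schur_det
  · exact .inl ⟨x + G.xy * y + G.xz * z, y + G.schurYZ * z, z, by linarith⟩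
  · have schurYZ_odd : Odd G.schurYZ := by
      have : Odd (G.schurYZ ^ 2) := ⟨G.schurZZ - 2, by linarith⟩
      exact (Int.odd_pow' two_ne_zero).mp this
    obtain ⟨t, ht⟩ := schurYZ_odd
    rw [ht] at squares
    exact .inr ⟨x + G.xy * y + G.xz * z, y + t * z, z, by linarith⟩

lemma exists_posDef_represents_of_mul_eq {N D p a s Δ : ℤ} (hp : 0 < p) (hD : 0 < D) (hΔ : 0 < Δ)
    (hND : p + Δ = N * D) (ha : a * p = D + s ^ 2) :
    ∃ F : TernaryForm, F.PosDef ∧ F.det = Δ ∧ F.Represents N := by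
  let F : TernaryForm := ⟨a, s, p, 1, 0, N⟩
  have schurYY_eq : F.schurYY = D := by
    change a * p - s ^ 2 = D
    linarith
  have det_eq : F.det = Δ := by
    change a * p * N + 2 * s * 1 * 0 - a * 0 ^ 2 - p * 1 ^ 2 - N * s ^ 2 = Δ
    linear_combination N * ha - hND
  exact ⟨F, ⟨pos_of_mul_pos_left (by rw [ha]; positivity) hp.le, by rwa [schurYY_eq],
    by rwa [det_eq]⟩, det_eq, 0, 0, 1, by simp [F, eval]⟩

end TernaryForm

section Residues

variable {N D p : ℕ}

lemma exists_prime_add_three_eq_mul (hN : N % 6 = 1) :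
    ∃ p D : ℕ, p.Prime ∧ p % 6 = 1 ∧ p + 3 = N * D := by
  have coprime : IsCoprime (4 * N - 3 : ℤ) (6 * N : ℕ) := by
    push_cast
    refine IsCoprime.mul_right ⟨1, -(2 * (N - 1) / 3), by omega⟩ ⟨N / 3, 1 - 4 * (N / 3), ?_⟩
    have : (N : ℤ) = 3 * (N / 3) + 1 := by omega
    linear_combination this
  obtain ⟨p, -, hp, hmod⟩ :=
    Nat.forall_exists_prime_gt_and_zmodEq 0 (q := 6 * N) (by omega) coprime
  obtain ⟨t, ht⟩ := hmod.dvd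
  push_cast at ht
  have hdvd : N ∣ p + 3 := by
    rw [← Int.natCast_dvd_natCast]
    exact ⟨4 - 6 * t, by push_cast; linarith⟩
  obtain ⟨D, hD⟩ := hdvd
  refine ⟨p, D, hp, ?_, hD⟩
  have : (p : ℤ) = 4 * N - 3 - 6 * (N * t) := by linarith
  omega

open NumberTheorySymbols

lemma jacobiSym_neg_three {m : ℕ} (hm : Odd m) : J(-3 | m) = J(m | 3) := by
  rw [jacobiSym.neg _ hm]
  rcases Nat.odd_mod_four_iff.mp (Nat.odd_iff.mp hm) with h | h
  · rw [ZMod.χ₄_nat_one_mod_four h, one_mul]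
    exact jacobiSym.quadratic_reciprocity_one_mod_four' (by decide) h
  · rw [ZMod.χ₄_nat_three_mod_four h, neg_one_mul, neg_eq_iff_eq_neg]
    exact jacobiSym.quadratic_reciprocity_three_mod_four rfl h

lemma jacobiSym_neg_three_eq_one {m : ℕ} (hm : m % 6 = 1) : J(-3 | m) = 1 := by
  rw [jacobiSym_neg_three (Nat.odd_iff.mpr (by omega)),
    jacobiSym.mod_left' (a₂ := 1) (by omega), jacobiSym.one_left]

lemma isSquare_neg_of_prime_add_three_eq_mul [Fact p.Prime] (hN : N % 12 = 1) (hp : p % 6 = 1)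
    (hND : p + 3 = N * D) : IsSquare ((-D : ℤ) : ZMod p) := by
  have hND' : (p : ℤ) + 3 = N * D := by exact_mod_cast hND
  have jacobi_N : J(N | p) = 1 := by
    rw [jacobiSym.quadratic_reciprocity_one_mod_four (by omega) (Nat.odd_iff.mpr (by omega)),
      jacobiSym.mod_left' (a₂ := -3), jacobiSym_neg_three_eq_one (by omega)]
    exact Int.modEq_iff_dvd.mpr ⟨-D, by linear_combination -hND'⟩
  have jacobi_mul : J(-D * N | p) = 1 := by
    rw [jacobiSym.mod_left' (a₂ := -3), jacobiSym_neg_three_eq_one hp]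
    exact Int.modEq_iff_dvd.mpr ⟨1, by linear_combination -hND'⟩
  rw [jacobiSym.mul_left, jacobi_N, mul_one] at jacobi_mul
  exact ZMod.isSquare_of_jacobiSym_eq_one jacobi_mul

end Residues

theorem exists_posDef_det_eq_three_represents {N : ℕ} (hN : N % 12 = 1) :
    ∃ F : TernaryForm, F.PosDef ∧ F.det = 3 ∧ F.Represents N := by
  obtain ⟨p, D, hp, hp6, hND⟩ := exists_prime_add_three_eq_mul (N := N) (by omega)
  have : Fact p.Prime := ⟨hp⟩
  obtain ⟨r, hr⟩ := isSquare_neg_of_prime_add_three_eq_mul hN hp6 hND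
  obtain ⟨s, rfl⟩ := ZMod.intCast_surjective r
  have hdvd : (p : ℤ) ∣ D + s ^ 2 := by
    rw [← ZMod.intCast_zmod_eq_zero_iff_dvd]
    push_cast at hr ⊢
    rw [sq, ← hr, add_neg_cancel]
  obtain ⟨a, ha⟩ := hdvd
  have hD : 0 < D := Nat.pos_of_ne_zero (by rintro rfl; omega)
  exact TernaryForm.exists_posDef_represents_of_mul_eq (p := p) (D := D) (a := a) (s := s)
    (by exact_mod_cast hp.pos) (by exact_mod_cast hD) three_pos (by exact_mod_cast hND)
    (by rw [ha, mul_comm])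

lemma sq_add_two_mul_emod_eight_ne_five (x y z : ℤ) :
    (x ^ 2 + 2 * (y ^ 2 + y * z + z ^ 2)) % 8 ≠ 5 := by
  intro h
  have no_solution : ∀ x y z : ZMod 8, x ^ 2 + 2 * (y ^ 2 + y * z + z ^ 2) ≠ 5 := by decide
  have h' := (ZMod.intCast_eq_intCast_iff _ 5 8).mpr h
  push_cast at h'
  exact no_solution x y z h'

theorem exists_eq_sq_add_sq_add_three_mul_sq {N : ℕ} (hN : N % 24 = 13) :
    ∃ x y z : ℤ, (N : ℤ) = x ^ 2 + y ^ 2 + 3 * z ^ 2 := by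
  obtain ⟨F, hF, hdet, hrep⟩ := exists_posDef_det_eq_three_represents (N := N) (by omega)
  refine (hF.eq_or_eq_of_represents_of_det_eq_three hdet hrep).resolve_right ?_
  rintro ⟨x, y, z, h⟩
  exact sq_add_two_mul_emod_eight_ne_five x y z (by omega)

lemma sq_emod_three (x : ℤ) : 3 ∣ x ∧ x ^ 2 % 3 = 0 ∨ ¬3 ∣ x ∧ x ^ 2 % 3 = 1 := by
  have : x % 3 = 0 ∨ x % 3 = 1 ∨ x % 3 = 2 := by omega
  have hsq : x ^ 2 % 3 = x % 3 * (x % 3) % 3 := by rw [sq, Int.mul_emod]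
  rcases this with h | h | h <;> rw [h] at hsq <;> omega

lemma exists_eq_sq_add_three_mul_sq_add_nine_mul_sq {N x y z : ℤ} (hN : N % 3 = 1)
    (h : N = x ^ 2 + y ^ 2 + 3 * z ^ 2) :
    ∃ a b c : ℤ, N = a ^ 2 + 3 * b ^ 2 + 9 * c ^ 2 := by
  have hx := sq_emod_three x
  have hy := sq_emod_three y
  by_cases hdvd : 3 ∣ y
  · obtain ⟨c, rfl⟩ := hdvd
    exact ⟨x, z, c, by linarith⟩
  · obtain ⟨c, rfl⟩ : 3 ∣ x := by omega
    exact ⟨y, z, c, by linarith⟩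

lemma sq_emod_eight (x : ℤ) :
    Odd x ∧ x ^ 2 % 8 = 1 ∨ x % 4 = 2 ∧ x ^ 2 % 8 = 4 ∨ 4 ∣ x ∧ x ^ 2 % 8 = 0 := by
  have : x % 8 = 0 ∨ x % 8 = 1 ∨ x % 8 = 2 ∨ x % 8 = 3 ∨ x % 8 = 4 ∨ x % 8 = 5 ∨ x % 8 = 6 ∨
      x % 8 = 7 := by omega
  have hsq : x ^ 2 % 8 = x % 8 * (x % 8) % 8 := by rw [sq, Int.mul_emod]
  rw [Int.odd_iff]
  rcases this with h | h | h | h | h | h | h | h <;> rw [h] at hsq <;> omega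

lemma rotation_sq_add_three_mul_sq (t y : ℤ) :
    (t + 2 * y) ^ 2 + 3 * t ^ 2 = (2 * t + y) ^ 2 + 3 * y ^ 2 := by
  ring

lemma exists_odd_sq_add_three_mul_sq_eq {x y : ℤ} (h : (x ^ 2 + 3 * y ^ 2) % 8 = 4) :
    ∃ x' y' : ℤ, Odd x' ∧ Odd y' ∧ x' ^ 2 + 3 * y' ^ 2 = x ^ 2 + 3 * y ^ 2 := by
  have hx := sq_emod_eight x
  have hy := sq_emod_eight y
  simp only [Int.odd_iff] at hx hy ⊢
  by_cases hodd : x % 2 = 1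
  · exact ⟨x, y, hodd, by omega, rfl⟩
  · obtain ⟨t, rfl⟩ : ∃ t, x = 2 * t + y := ⟨(x - y) / 2, by omega⟩
    exact ⟨t + 2 * y, t, by omega, by omega, rotation_sq_add_three_mul_sq t y⟩

lemma exists_odd_sq_add_three_mul_sq_add_nine_mul_sq_eq {x y z : ℤ}
    (h : (x ^ 2 + 3 * y ^ 2 + 9 * z ^ 2) % 8 = 5) :
    ∃ x' y' z' : ℤ, Odd x' ∧ Odd y' ∧ Odd z' ∧
      x' ^ 2 + 3 * y' ^ 2 + 9 * z' ^ 2 = x ^ 2 + 3 * y ^ 2 + 9 * z ^ 2 := by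
  have hx := sq_emod_eight x
  have hy := sq_emod_eight y
  have hz := sq_emod_eight z
  simp only [Int.odd_iff] at hx hy hz
  by_cases hodd : Odd z
  · have := Int.odd_iff.mp hodd
    obtain ⟨x', y', hx', hy', heq⟩ := exists_odd_sq_add_three_mul_sq_eq (x := x) (y := y) (by omega)
    exact ⟨x', y', z, hx', hy', hodd, by linarith⟩
  · have := Int.odd_iff.not.mp hodd
    obtain ⟨y', z', hy', hz', heq⟩ := exists_odd_sq_add_three_mul_sq_eq (x := y) (y := z) (by omega)
    exact ⟨x, y', z', Int.odd_iff.mpr (by omega), hy', hz', by linarith⟩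

lemma gcd_six_eq_one_iff {x : ℤ} : Int.gcd x 6 = 1 ↔ Odd x ∧ ¬3 ∣ x := by
  rw [← Int.isCoprime_iff_gcd_eq_one, show (6 : ℤ) = 2 * 3 by norm_num, IsCoprime.mul_right_iff,
    isCoprime_comm, Int.prime_two.coprime_iff_not_dvd, isCoprime_comm,
    Int.prime_three.coprime_iff_not_dvd, ← even_iff_two_dvd, Int.not_even_iff_odd]

lemma exists_gcd_six_sq_add_three_mul_sq_eq {x y : ℤ} (hx : Int.gcd x 6 = 1) (hy : Odd y) :
    ∃ x' y' : ℤ, Int.gcd x' 6 = 1 ∧ Int.gcd y' 6 = 1 ∧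
      x' ^ 2 + 3 * y' ^ 2 = x ^ 2 + 3 * y ^ 2 := by
  simp only [gcd_six_eq_one_iff, Int.odd_iff] at hx hy ⊢
  by_cases hdvd : 3 ∣ y
  · -- Exactly one of `(x - y) / 2` and `(x + y) / 2` is odd.
    wlog hmod : (x - y) % 4 = 2 generalizing y
    · simpa only [neg_sq] using this (y := -y) (by omega) (by omega) (by omega)
    obtain ⟨t, rfl⟩ : ∃ t, x = 2 * t + y := ⟨(x - y) / 2, by omega⟩
    exact ⟨t + 2 * y, t, by omega, by omega, rotation_sq_add_three_mul_sq t y⟩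
  · exact ⟨x, y, hx, ⟨hy, hdvd⟩, rfl⟩

theorem rep_24n_add_thirteen (n : ℕ) :
    ∃ x y z : ℤ, Int.gcd x 6 = 1 ∧ Int.gcd y 6 = 1 ∧ Int.gcd z 6 = 1 ∧
      24 * (n : ℤ) + 13 = x ^ 2 + 3 * y ^ 2 + 9 * z ^ 2 := by
  obtain ⟨x, y, z, hsum⟩ := exists_eq_sq_add_sq_add_three_mul_sq (N := 24 * n + 13) (by omega)
  obtain ⟨a, b, c, habc⟩ := exists_eq_sq_add_three_mul_sq_add_nine_mul_sq (by omega) hsum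
  push_cast at habc
  obtain ⟨x₁, y₁, z₁, hx₁, hy₁, hz₁, h₁⟩ :=
    exists_odd_sq_add_three_mul_sq_add_nine_mul_sq_eq (x := a) (y := b) (z := c) (by omega)
  have three_not_dvd : ¬3 ∣ x₁ := by
    have := sq_emod_three x₁
    omega
  obtain ⟨x₂, y₂, hx₂, hy₂, h₂⟩ :=
    exists_gcd_six_sq_add_three_mul_sq_eq (gcd_six_eq_one_iff.mpr ⟨hx₁, three_not_dvd⟩) hy₁
  obtain ⟨y₃, z₃, hy₃, hz₃, h₃⟩ := exists_gcd_six_sq_add_three_mul_sq_eq hy₂ hz₁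
  exact ⟨x₂, y₃, z₃, hx₂, hy₃, hz₃, by linarith⟩
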